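/- Let p : I × I → [0,∞) satisfy hypotheses (H1), (H2), (H3) and (H4). Then there exists a constant C₁ > 0, depending only on S, δ₀, K and λ, such that for all x ∈ I, all s,t ∈ Δ_x and every v ∈ [s,t] (note that [s,t] ⊆ Δ_x): all three Green kernel values are finite and C₁⁻¹·G_{p,Δ_x}(s,v)·G_{p,Δ_x}(v,t) ≤ G_{p,Δ_x}(s,t) ≤ C₁·G_{p,Δ_x}(s,v)·G_{p,Δ_x}(v,t). (Lemma 4.3 of the paper: almost multiplicativity of the Green kernels along geodesics, uniformly over the branches Δ_x.) -/

import Mathlib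

open scoped ENNReal

namespace Paper

/-- Words in the two letters `α, β`: the free monoid on two generators, as `List Bool`.
The head of the list is the leftmost letter. -/
abbrev Word := List Bool

/-- Length of the longest common prefix of two lists. -/
def lcpLen : List Bool → List Bool → ℕ
  | a :: s, b :: t => if a = b then lcpLen s t + 1 else 0
  | _, _ => 0

/-- Length of the longest common suffix of two words. -/
def lcsLen (s t : Word) : ℕ := lcpLen s.reverse t.reverse

/-- The tree metric on `Word`: `d(s,t) = (|s| - k) + (|t| - k)`, `k` the length of the
longest common suffix. -/
def treeDist (s t : Word) : ℕ := (s.length - lcsLen s t) + (t.length - lcsLen s t)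

/-- The branch `Δ_x = {u x : u ∈ I}` of words having `x` as a suffix. -/
def Delta (x : Word) : Set Word := {s | x <:+ s}

/-- The geodesic segment `[s,t] = {v : d(s,v) + d(v,t) = d(s,t)}`. -/
def geodesic (s t : Word) : Set Word := {v | treeDist s v + treeDist v t = treeDist s t}

/-- Paths of `n` steps from `s` to `t` staying in `Ω`. -/
def pathSet {X : Type*} (Ω : Set X) (n : ℕ) (s t : X) : Set (Fin (n + 1) → X) :=
  {σ | σ 0 = s ∧ σ (Fin.last n) = t ∧ ∀ i, σ i ∈ Ω}

/-- The weight `∏ a(s_i, s_{i+1})` of a path, as an extended nonnegative real. -/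
noncomputable def weightE {X : Type*} (a : X → X → ℝ) (n : ℕ) (σ : Fin (n + 1) → X) : ℝ≥0∞ :=
  ∏ i : Fin n, ENNReal.ofReal (a (σ i.castSucc) (σ i.succ))

/-- The `n`-step kernel `a⁽ⁿ⁾(s,t)` of the kernel `a` on `Ω`, with values in `[0,∞]`. -/
noncomputable def nStepE {X : Type*} (Ω : Set X) (a : X → X → ℝ) (n : ℕ) (s t : X) : ℝ≥0∞ :=
  ∑' σ : pathSet Ω n s t, weightE a n σ.1

/-- The Green kernel `G_a(s,t) = Σ_n a⁽ⁿ⁾(s,t)` of `a` on `Ω`, with values in `[0,∞]`. -/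
noncomputable def greenE {X : Type*} (Ω : Set X) (a : X → X → ℝ) (s t : X) : ℝ≥0∞ :=
  ∑' n : ℕ, nStepE Ω a n s t

/-- The weight of a path, real version (for signed kernels). -/
noncomputable def weightR {X : Type*} (a : X → X → ℝ) (n : ℕ) (σ : Fin (n + 1) → X) : ℝ :=
  ∏ i : Fin n, a (σ i.castSucc) (σ i.succ)

/-- The `n`-step kernel of a signed kernel `a` on `Ω`. -/
noncomputable def nStepR {X : Type*} (Ω : Set X) (a : X → X → ℝ) (n : ℕ) (s t : X) : ℝ :=
  ∑' σ : pathSet Ω n s t, weightR a n σ.1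

/-- The Green kernel of a signed kernel `a` on `Ω`, as a real number. -/
noncomputable def greenR {X : Type*} (Ω : Set X) (a : X → X → ℝ) (s t : X) : ℝ :=
  ∑' n : ℕ, nStepR Ω a n s t

/-- The Green kernel of `|a|`: finiteness of this expresses absolute convergence of the
series defining the Green kernel of `a`. -/
noncomputable def greenAbs {X : Type*} (Ω : Set X) (a : X → X → ℝ) (s t : X) : ℝ≥0∞ :=
  greenE Ω (fun u v => |a u v|) s t

/-- (H1): finite range `S`. -/
def H1 (p : Word → Word → ℝ) (S : ℕ) : Prop := ∀ s t, S < treeDist s t → p s t = 0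

/-- (H2): nonzero transition probabilities are bounded below by `δ₀`. -/
def H2 (p : Word → Word → ℝ) (δ₀ : ℝ) : Prop := ∀ s t, 0 < p s t → δ₀ ≤ p s t

/-- (H3): uniform irreducibility. -/
def H3 (p : Word → Word → ℝ) (δ₀ : ℝ) (K : ℕ) : Prop :=
  ∀ s t, treeDist s t = 1 → ∃ k ≤ K, ∃ u : ℕ → Word, u 0 = s ∧ u k = t ∧
    ∀ i < k, ∀ x : Word, δ₀ ≤ p (u i ++ x) (u (i + 1) ++ x)

/-- The operator `(Pf)(s) = Σ_t p(s,t) f(t)` extends to a bounded operator of norm at most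
`lam` on `ℓ²(X, m)`, expressed via the associated bilinear form on finitely supported
functions. -/
def opNormBound {X : Type*} (m : X → ℝ) (p : X → X → ℝ) (lam : ℝ) : Prop :=
  ∀ f g : X → ℝ, (Function.support f).Finite → (Function.support g).Finite →
    |∑' s, m s * g s * ∑' t, p s t * f t| ≤
      lam * Real.sqrt (∑' x, m x * f x ^ 2) * Real.sqrt (∑' x, m x * g x ^ 2)

/-- (H4): there is a weight `m` for which `P` is bounded of norm at most `lam` on `ℓ²(I,m)`. -/
def H4 (p : Word → Word → ℝ) (m : Word → ℝ) (lam : ℝ) : Prop :=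
  (∀ x, 0 < m x) ∧ opNormBound m p lam

/-- Substochasticity: `Σ_t p(s,t) ≤ 1` for every `s`. -/
def Substochastic (p : Word → Word → ℝ) : Prop :=
  ∀ s, (∑' t, ENNReal.ofReal (p s t)) ≤ 1

/-- `b` is a `q`-perturbation of `p` on `Δ_z` (with constant `C`). -/
def Perturb (p b : Word → Word → ℝ) (z : Word) (q C : ℝ) : Prop :=
  ∀ s t, s ∈ Delta z → t ∈ Delta z →
    |b s t| ≤ p s t ∧ |b s t - p s t| ≤ C * q ^ s.length

/-- The word `ω|k = ω(k-1) ω(k-2) ⋯ ω(0)` of length `k` determined by an end `ω`. -/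
def endWord (ω : ℕ → Bool) (k : ℕ) : Word := (List.range k).reverse.map ω

/-- The last-entrance kernel `M_p(s,u)`: sum over paths from `s` to `u` of length at least
one whose second-to-last point lies outside `Δ_x`. -/
noncomputable def lastEnter (p : Word → Word → ℝ) (x s u : Word) : ℝ≥0∞ :=
  ∑' m : ℕ, ∑' σ : {σ : Fin (m + 2) → Word //
      σ ∈ pathSet Set.univ (m + 1) s u ∧ σ ((Fin.last m).castSucc) ∉ Delta x},
    weightE p (m + 1) σ.1

/-- The quantum integer `[n]_q = (q⁻ⁿ - qⁿ)/(q⁻¹ - q)`. -/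
noncomputable def qInt (q : ℝ) (n : ℕ) : ℝ := (q ^ (-(n : ℤ)) - q ^ (n : ℤ)) / (q⁻¹ - q)

/-- The lengths of the blocks in the canonical factorization of a word into maximal
alternating subwords. -/
def blockLens : Word → List ℕ
  | [] => []
  | [_] => [1]
  | a :: b :: rest =>
    match blockLens (b :: rest) with
    | [] => [1]
    | k :: ks => if a = b then 1 :: (k :: ks) else (k + 1) :: ks

/-- The quantum dimension `dim_q(x) = Π_i [|x_i| + 1]_q` over the blocks of `x`. -/
noncomputable def dimq (q : ℝ) (x : Word) : ℝ := ((blockLens x).map fun L => qInt q (L + 1)).prod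

/-- The classical dimension `dim(x) = Π_i (|x_i| + 1)` over the blocks of `x`. -/
noncomputable def dimn (x : Word) : ℝ := ((blockLens x).map fun L => (L + 1 : ℝ)).prod

/-- The involution `x ↦ x̄`: reverse the word and exchange the two letters. -/
def bar (x : Word) : Word := (x.map fun a => !a).reverse

/-- The fusion multiplicity `mᵗ_{r,s}`: the number of words `z` such that `r = r₀ z`,
`s = z̄ s₀`, `t = r₀ s₀` for some `r₀, s₀`. -/
noncomputable def fuse (r s t : Word) : ℕ :=
  {z : Word | ∃ r₀ s₀ : Word, r = r₀ ++ z ∧ s = bar z ++ s₀ ∧ t = r₀ ++ s₀}.ncard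

/-- A finitely supported probability measure on `Word`. -/
def IsProbMeasure (μ : Word → ℝ) : Prop :=
  (∀ x, 0 ≤ μ x) ∧ (Function.support μ).Finite ∧ ∑' x, μ x = 1

/-- The transition kernel `p_μ(s,t) = Σ_r μ(r) mᵗ_{r,s} dim_q(t)/(dim_q(r) dim_q(s))`. -/
noncomputable def pMu (q : ℝ) (μ : Word → ℝ) (s t : Word) : ℝ :=
  ∑' r, μ r * (fuse r s t : ℝ) * dimq q t / (dimq q r * dimq q s)

/-- The `q`-binomial coefficient. -/
noncomputable def qbinom (q : ℝ) (n k : ℕ) : ℝ :=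
  q ^ (-((k * (n - k) : ℕ) : ℤ)) *
    ∏ i ∈ Finset.range k, (1 - q ^ (2 * (n - i))) / (1 - q ^ (2 * (k - i)))


/-!
Restricting to paths that stay in `Δ_x`, the function `s ↦ G(s, t)` is superharmonic, and harmonic
away from `t`; the minimum principle compares it with other superharmonic functions.

* Comparing `G(v, t) G(·, v)` with `G(v, v) G(·, t)`, which agree at `v`, gives
  `G(s, v) G(v, t) ≤ G(v, v) G(s, t)`, and the norm bound on `P` gives `G(v, v) ≤ (1 - λ)⁻¹`.
* For the other inequality, compare `G(·, t)` with `G(·, v) G(v, t)`. In a tree, a step of length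
  at most `S` from a point `s` farther than `S` from `v` cannot jump over `v`: if `v ∈ [s, t]`, then
  `v ∈ [u, t]` after the step to `u`. So a path from `s` to `t` meets the ball of radius `S` about
  `v`, and on that ball uniform irreducibility (a Harnack inequality) gives the comparison.
-/

/-! ### Green kernels of nonnegative kernels -/

section Green

variable {X : Type*} {Ω : Set X} {a : X → X → ℝ} {n : ℕ} {s t v : X}

lemma nStepE_of_notMem (hs : s ∉ Ω) : nStepE Ω a n s t = 0 := by
  have : IsEmpty (pathSet Ω n s t) := ⟨fun σ => hs (σ.2.1 ▸ σ.2.2.2 0)⟩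
  exact tsum_empty

lemma nStepE_zero_self (hs : s ∈ Ω) : nStepE Ω a 0 s s = 1 := by
  rw [nStepE, tsum_eq_single (⟨fun _ => s, rfl, rfl, fun _ => hs⟩ : pathSet Ω 0 s s)]
  · simp [weightE]
  · intro σ hσ
    refine absurd (Subtype.ext (funext fun i => ?_)) hσ
    rw [Fin.fin_one_eq_zero i]
    exact σ.2.1

lemma nStepE_zero_of_ne (hst : s ≠ t) : nStepE Ω a 0 s t = 0 := by
  have : IsEmpty (pathSet Ω 0 s t) := ⟨fun σ => hst (σ.2.1 ▸ σ.2.2.1)⟩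
  exact tsum_empty

/-- A path of `n + 1` steps from `s` is a first step to some `u` followed by a path of `n` steps
from `u`. -/
def pathSetSuccEquiv (Ω : Set X) (n : ℕ) (s t : X) (hs : s ∈ Ω) :
    (Σ u, pathSet Ω n u t) ≃ pathSet Ω (n + 1) s t where
  toFun τ := ⟨Fin.cons s τ.2.1, rfl, by
    rw [← Fin.succ_last, Fin.cons_succ]
    exact τ.2.2.2.1, Fin.cases hs τ.2.2.2.2⟩
  invFun σ := ⟨σ.1 1, Fin.tail σ.1, rfl, σ.2.2.1, fun _ => σ.2.2.2 _⟩
  left_inv := by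
    rintro ⟨u, τ, rfl, ht, hΩ⟩
    rfl
  right_inv := by
    rintro ⟨σ, rfl, ht, hΩ⟩
    exact Subtype.ext (Fin.cons_self_tail σ)

lemma nStepE_succ (hs : s ∈ Ω) :
    nStepE Ω a (n + 1) s t = ∑' u, ENNReal.ofReal (a s u) * nStepE Ω a n u t := by
  simp only [nStepE]
  rw [← (pathSetSuccEquiv Ω n s t hs).tsum_eq, ENNReal.tsum_sigma']
  simp only [← ENNReal.tsum_mul_left]
  refine tsum_congr fun u => tsum_congr fun τ => ?_
  have h0 : τ.1 0 = u := τ.2.1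
  simp [weightE, pathSetSuccEquiv, Fin.prod_univ_succ, h0]

lemma greenE_of_notMem (hs : s ∉ Ω) : greenE Ω a s t = 0 := by
  simp [greenE, nStepE_of_notMem hs]

lemma greenE_eq_nStepE_zero_add (hs : s ∈ Ω) :
    greenE Ω a s t = nStepE Ω a 0 s t + ∑' u, ENNReal.ofReal (a s u) * greenE Ω a u t := by
  simp only [greenE]
  rw [tsum_eq_zero_add' ENNReal.summable]
  simp only [nStepE_succ hs, ← ENNReal.tsum_mul_left]
  rw [ENNReal.tsum_comm]

lemma tsum_mul_greenE_le (hs : s ∈ Ω) :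
    ∑' u, ENNReal.ofReal (a s u) * greenE Ω a u t ≤ greenE Ω a s t := by
  rw [greenE_eq_nStepE_zero_add hs]
  exact le_add_self

lemma mul_greenE_le (hs : s ∈ Ω) (u : X) :
    ENNReal.ofReal (a s u) * greenE Ω a u t ≤ greenE Ω a s t :=
  (ENNReal.le_tsum u).trans (tsum_mul_greenE_le hs)

lemma one_le_greenE_self (hs : s ∈ Ω) : 1 ≤ greenE Ω a s s := by
  rw [greenE_eq_nStepE_zero_add hs, nStepE_zero_self hs]
  exact le_self_add

lemma pow_mul_greenE_le_of_path {ε : ℝ} {k : ℕ} {u : ℕ → X} (huΩ : ∀ i < k, u i ∈ Ω)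
    (hu : ∀ i < k, ε ≤ a (u i) (u (i + 1))) :
    ENNReal.ofReal ε ^ k * greenE Ω a (u k) t ≤ greenE Ω a (u 0) t := by
  induction k with
  | zero => simp
  | succ k ih =>
    calc ENNReal.ofReal ε ^ (k + 1) * greenE Ω a (u (k + 1)) t
        = ENNReal.ofReal ε ^ k * (ENNReal.ofReal ε * greenE Ω a (u (k + 1)) t) := by
          rw [pow_succ, mul_assoc]
      _ ≤ ENNReal.ofReal ε ^ k *
            (ENNReal.ofReal (a (u k) (u (k + 1))) * greenE Ω a (u (k + 1)) t) := by
          gcongr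
          exact hu k k.lt_succ_self
      _ ≤ ENNReal.ofReal ε ^ k * greenE Ω a (u k) t := by
          gcongr
          exact mul_greenE_le (huΩ k k.lt_succ_self) _
      _ ≤ greenE Ω a (u 0) t :=
          ih (fun i hi => huΩ i (hi.trans k.lt_succ_self))
            fun i hi => hu i (hi.trans k.lt_succ_self)

/-- The minimum principle for the superharmonic function `h` on a region `U` with boundary `B`. -/
theorem const_mul_greenE_le_of_superharmonic {U B : Set X} {c : ℝ≥0∞} {h : X → ℝ≥0∞}
    (hUΩ : U ⊆ Ω) (htU : t ∉ U) (hstep : ∀ s ∈ U, ∀ u ∈ Ω, a s u ≠ 0 → u ∈ U ∪ B)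
    (hsuper : ∀ s ∈ U, ∑' u, ENNReal.ofReal (a s u) * h u ≤ h s)
    (hB : ∀ s ∈ B, c * greenE Ω a s t ≤ h s) (hs : s ∈ U ∪ B) :
    c * greenE Ω a s t ≤ h s := by
  suffices key : ∀ N, ∀ s ∈ U ∪ B, c * ∑ n ∈ Finset.range N, nStepE Ω a n s t ≤ h s by
    rw [greenE, ENNReal.tsum_eq_iSup_nat, ENNReal.mul_iSup]
    exact iSup_le fun N => key N s hs
  intro N
  induction N with
  | zero => simp
  | succ N ih =>
    rintro s (hsU | hsB)
    · have hterm (u : X) : ENNReal.ofReal (a s u) *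
          (c * ∑ n ∈ Finset.range N, nStepE Ω a n u t) ≤ ENNReal.ofReal (a s u) * h u := by
        by_cases huΩ : u ∈ Ω
        · by_cases hu : a s u = 0
          · simp [hu]
          · exact mul_le_mul_right (ih u (hstep s hsU u huΩ hu)) _
        · simp [nStepE_of_notMem huΩ]
      have hst : s ≠ t := ne_of_mem_of_not_mem hsU htU
      calc c * ∑ n ∈ Finset.range (N + 1), nStepE Ω a n s t
          = ∑' u, ENNReal.ofReal (a s u) * (c * ∑ n ∈ Finset.range N, nStepE Ω a n u t) := by
            rw [Finset.sum_range_succ', nStepE_zero_of_ne hst, add_zero]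
            simp only [nStepE_succ (hUΩ hsU), mul_left_comm _ c, ENNReal.tsum_mul_left,
              Finset.mul_sum _ _ (ENNReal.ofReal _)]
            rw [Summable.tsum_finsetSum fun _ _ => ENNReal.summable]
        _ ≤ ∑' u, ENNReal.ofReal (a s u) * h u := ENNReal.tsum_le_tsum hterm
        _ ≤ h s := hsuper s hsU
    · refine le_trans ?_ (hB s hsB)
      gcongr
      exact ENNReal.sum_le_tsum _

theorem greenE_mul_greenE_le (s v t : X) :
    greenE Ω a s v * greenE Ω a v t ≤ greenE Ω a v v * greenE Ω a s t := by
  by_cases hs : s ∈ Ω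
  · rw [mul_comm]
    refine const_mul_greenE_le_of_superharmonic (U := Ω \ {v}) (B := {v})
      (h := fun s => greenE Ω a v v * greenE Ω a s t) Set.sdiff_subset (by simp)
      (fun _ _ u hu _ => by simp [hu]) (fun s hs => ?_) ?_ (by simp [hs])
    · simp only [mul_left_comm _ (greenE Ω a v v), ENNReal.tsum_mul_left]
      gcongr
      exact tsum_mul_greenE_le hs.1
    · rintro s rfl
      exact (mul_comm _ _).le
  · simp [greenE_of_notMem hs]

end Green

/-! ### Green kernels of contractions of `ℓ²(X, m)` -/

section Contraction

variable {X : Type*} {Ω : Set X} {a : X → X → ℝ} {m : X → ℝ} {lam : ℝ}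

lemma finite_support_nStepE (hcol : ∀ t, (Function.support (a · t)).Finite) (n : ℕ) (t : X) :
    (Function.support (nStepE Ω a n · t)).Finite := by
  induction n with
  | zero =>
    refine (Set.finite_singleton t).subset fun s hs => ?_
    by_contra hst
    exact hs (nStepE_zero_of_ne hst)
  | succ n ih =>
    refine (ih.biUnion fun u _ => hcol u).subset fun s hs => ?_
    have hsΩ : s ∈ Ω := by
      by_contra hsΩ
      exact hs (nStepE_of_notMem hsΩ)
    rw [Function.mem_support, nStepE_succ hsΩ, ne_eq, ENNReal.tsum_eq_zero, not_forall] at hs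
    obtain ⟨u, hu⟩ := hs
    refine Set.mem_biUnion (x := u) (right_ne_zero_of_mul hu) fun hsu => ?_
    simp_all

lemma finite_support_toReal_nStepE (hcol : ∀ t, (Function.support (a · t)).Finite) (n : ℕ)
    (t : X) : (Function.support fun s => (nStepE Ω a n s t).toReal).Finite :=
  (finite_support_nStepE (Ω := Ω) hcol n t).subset fun _ hs h0 => hs (by simp [h0])

lemma nStepE_ne_top (hcol : ∀ t, (Function.support (a · t)).Finite) (n : ℕ) (s t : X) :
    nStepE Ω a n s t ≠ ⊤ := by
  by_cases hs : s ∈ Ω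
  · induction n generalizing s with
    | zero =>
      by_cases hst : s = t
      · subst hst
        simp [nStepE_zero_self hs]
      · simp [nStepE_zero_of_ne hst]
    | succ n ih =>
      rw [nStepE_succ hs, tsum_eq_sum (s := (finite_support_nStepE (Ω := Ω) hcol n t).toFinset)
        fun u hu => by simp_all]
      refine ENNReal.sum_ne_top.2 fun u _ => ENNReal.mul_ne_top ENNReal.ofReal_ne_top ?_
      by_cases hu : u ∈ Ω
      · exact ih u hu
      · simp [nStepE_of_notMem hu]
  · simp [nStepE_of_notMem hs]

lemma toReal_nStepE_succ (ha : ∀ s t, 0 ≤ a s t)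
    (hcol : ∀ t, (Function.support (a · t)).Finite) (n : ℕ) {s : X} (t : X) (hs : s ∈ Ω) :
    (nStepE Ω a (n + 1) s t).toReal = ∑' u, a s u * (nStepE Ω a n u t).toReal := by
  rw [nStepE_succ hs, ENNReal.tsum_toReal_eq fun u =>
    ENNReal.mul_ne_top ENNReal.ofReal_ne_top (nStepE_ne_top hcol n u t)]
  simp only [ENNReal.toReal_mul, ENNReal.toReal_ofReal (ha _ _)]

/-- The norm of `ℓ²(X, m)`. It has the junk value `0` on functions outside `ℓ²(X, m)`, and is only
used for finitely supported functions. -/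
noncomputable def weightedNorm (m f : X → ℝ) : ℝ := √(∑' x, m x * f x ^ 2)

lemma weightedNorm_nonneg (m f : X → ℝ) : 0 ≤ weightedNorm m f := Real.sqrt_nonneg _

lemma sqrt_mul_abs_le_weightedNorm (hm : ∀ x, 0 ≤ m x) {f : X → ℝ}
    (hf : (Function.support f).Finite) (x : X) : √(m x) * |f x| ≤ weightedNorm m f := by
  have hsummable : Summable fun x => m x * f x ^ 2 :=
    summable_of_hasFiniteSupport (hf.subset fun x hx hfx => by simp [hfx] at hx)
  rw [← Real.sqrt_sq_eq_abs, ← Real.sqrt_mul (hm x)]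
  exact Real.sqrt_le_sqrt
    (hsummable.le_tsum x fun y _ => mul_nonneg (hm y) (sq_nonneg _))

/-- Truncating `P f` to a finite set does not spoil the norm bound. -/
lemma weightedNorm_le_of_eq_on_support (hm : ∀ x, 0 ≤ m x) (hlam : 0 ≤ lam)
    (hP : opNormBound m a lam) {f g : X → ℝ} (hf : (Function.support f).Finite)
    (hg : (Function.support g).Finite) (hfg : ∀ s, g s ≠ 0 → g s = ∑' t, a s t * f t) :
    weightedNorm m g ≤ lam * weightedNorm m f := by
  have hform : ∑' s, m s * g s * ∑' t, a s t * f t = ∑' s, m s * g s ^ 2 := by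
    refine tsum_congr fun s => ?_
    by_cases hs : g s = 0
    · simp [hs]
    · rw [← hfg s hs]
      ring
  have hsq : weightedNorm m g * weightedNorm m g ≤
      lam * weightedNorm m f * weightedNorm m g := by
    have hnonneg : 0 ≤ ∑' s, m s * g s ^ 2 :=
      tsum_nonneg fun s => mul_nonneg (hm s) (sq_nonneg _)
    have hbound := hP f g hf hg
    rw [hform, abs_of_nonneg hnonneg] at hbound
    rwa [weightedNorm, Real.mul_self_sqrt hnonneg]
  rcases (weightedNorm_nonneg m g).eq_or_lt with hzero | hpos
  · rw [← hzero]
    exact mul_nonneg hlam (weightedNorm_nonneg m f)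
  · exact le_of_mul_le_mul_right hsq hpos

lemma weightedNorm_nStepE_le (ha : ∀ s t, 0 ≤ a s t)
    (hcol : ∀ t, (Function.support (a · t)).Finite) (hm : ∀ x, 0 ≤ m x) (hlam : 0 ≤ lam)
    (hP : opNormBound m a lam) (n : ℕ) (t : X) :
    weightedNorm m (fun s => (nStepE Ω a n s t).toReal) ≤ lam ^ n * √(m t) := by
  induction n with
  | zero =>
    rw [weightedNorm, tsum_eq_single t fun s hs => by simp [nStepE_zero_of_ne hs], pow_zero,
      one_mul]
    refine Real.sqrt_le_sqrt ?_
    by_cases ht : t ∈ Ω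
    · simp [nStepE_zero_self ht]
    · simp [nStepE_of_notMem ht, hm t]
  | succ n ih =>
    calc _ ≤ lam * weightedNorm m fun s => (nStepE Ω a n s t).toReal := by
          refine weightedNorm_le_of_eq_on_support hm hlam hP
            (finite_support_toReal_nStepE hcol n t) (finite_support_toReal_nStepE hcol (n + 1) t)
            fun s hs => ?_
          refine toReal_nStepE_succ ha hcol n t ?_
          by_contra hsΩ
          simp [nStepE_of_notMem hsΩ] at hs
      _ ≤ lam * (lam ^ n * √(m t)) := by gcongr
      _ = lam ^ (n + 1) * √(m t) := by ring

theorem greenE_le_of_opNormBound (ha : ∀ s t, 0 ≤ a s t)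
    (hcol : ∀ t, (Function.support (a · t)).Finite) (hm : ∀ x, 0 < m x) (hlam₀ : 0 ≤ lam)
    (hlam₁ : lam < 1) (hP : opNormBound m a lam) (s t : X) :
    greenE Ω a s t ≤ ENNReal.ofReal ((1 - lam)⁻¹ * (√(m t) / √(m s))) := by
  have hstep (n : ℕ) : (nStepE Ω a n s t).toReal ≤ lam ^ n * (√(m t) / √(m s)) := by
    have hle := (sqrt_mul_abs_le_weightedNorm (fun x => (hm x).le)
      (finite_support_toReal_nStepE (Ω := Ω) hcol n t) s).trans
      (weightedNorm_nStepE_le ha hcol (fun x => (hm x).le) hlam₀ hP n t)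
    rw [abs_of_nonneg ENNReal.toReal_nonneg] at hle
    rwa [← mul_div_assoc, le_div_iff₀ (Real.sqrt_pos.2 (hm s)), mul_comm]
  have hgeom := (hasSum_geometric_of_lt_one hlam₀ hlam₁).mul_right (√(m t) / √(m s))
  rw [← hgeom.tsum_eq, ENNReal.ofReal_tsum_of_nonneg (fun n => by positivity) hgeom.summable]
  refine ENNReal.tsum_le_tsum fun n => ?_
  rw [ENNReal.le_ofReal_iff_toReal_le (nStepE_ne_top hcol n s t) (by positivity)]
  exact hstep n

end Contraction

/-! ### The tree of words -/

section Tree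

lemma lcpLen_le_length_left (a b : List Bool) : lcpLen a b ≤ a.length := by
  induction a generalizing b with
  | nil => simp [lcpLen]
  | cons x a ih =>
    cases b with
    | nil => simp [lcpLen]
    | cons y b => grind [lcpLen]

lemma lcpLen_comm (a b : List Bool) : lcpLen a b = lcpLen b a := by
  induction a generalizing b with
  | nil => cases b <;> simp [lcpLen]
  | cons x a ih =>
    cases b with
    | nil => simp [lcpLen]
    | cons y b => simp only [lcpLen, ih b, eq_comm]

lemma min_lcpLen_le (a b c : List Bool) : min (lcpLen a b) (lcpLen b c) ≤ lcpLen a c := by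
  induction a generalizing b c with
  | nil => simp [lcpLen]
  | cons x a ih =>
    cases b with
    | nil => simp [lcpLen]
    | cons y b =>
      cases c with
      | nil => simp [lcpLen]
      | cons z c => grind [lcpLen]

lemma lcpLen_append_append (c a b : List Bool) :
    lcpLen (c ++ a) (c ++ b) = c.length + lcpLen a b := by
  induction c with
  | nil => simp
  | cons x c ih => simp [lcpLen, ih, add_right_comm]

lemma lcpLen_eq_length_iff (a b : List Bool) : lcpLen a b = a.length ↔ a <+: b := by
  induction a generalizing b with
  | nil => simp [lcpLen]
  | cons x a ih =>
    cases b with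
    | nil => simp [lcpLen]
    | cons y b => grind [lcpLen]

lemma exists_eq_append_lcpLen (a b : List Bool) :
    ∃ c a' b', a = c ++ a' ∧ b = c ++ b' ∧ lcpLen a' b' = 0 := by
  induction a generalizing b with
  | nil => exact ⟨[], [], b, rfl, rfl, by simp [lcpLen]⟩
  | cons x a ih =>
    cases b with
    | nil => exact ⟨[], x :: a, [], rfl, rfl, rfl⟩
    | cons y b =>
      by_cases hxy : x = y
      · obtain ⟨c, a', b', rfl, rfl, h⟩ := ih b
        exact ⟨x :: c, a', b', rfl, by simp [hxy], h⟩
      · exact ⟨[], x :: a, y :: b, rfl, rfl, by simp [lcpLen, hxy]⟩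

lemma lcsLen_le_length_left (s t : Word) : lcsLen s t ≤ s.length := by
  simpa [lcsLen] using lcpLen_le_length_left s.reverse t.reverse

lemma lcsLen_comm (s t : Word) : lcsLen s t = lcsLen t s := lcpLen_comm _ _

lemma lcsLen_le_length_right (s t : Word) : lcsLen s t ≤ t.length :=
  lcsLen_comm s t ▸ lcsLen_le_length_left t s

lemma min_lcsLen_le (s t u : Word) : min (lcsLen s t) (lcsLen t u) ≤ lcsLen s u :=
  min_lcpLen_le _ _ _

lemma lcsLen_eq_length_iff (s t : Word) : lcsLen s t = s.length ↔ s <:+ t := by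
  rw [lcsLen, ← List.length_reverse, lcpLen_eq_length_iff, List.reverse_prefix]

lemma lcsLen_append_append (s t x : Word) :
    lcsLen (s ++ x) (t ++ x) = lcsLen s t + x.length := by
  simp [lcsLen, lcpLen_append_append, add_comm]

/-- `lcsLen` is the Gromov product based at the empty word; stated without subtraction. -/
lemma treeDist_add_two_mul_lcsLen (s t : Word) :
    treeDist s t + 2 * lcsLen s t = s.length + t.length := by
  have := lcsLen_le_length_left s t
  have := lcsLen_le_length_right s t
  grind [treeDist]

lemma treeDist_comm (s t : Word) : treeDist s t = treeDist t s := by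
  rw [treeDist, treeDist, lcsLen_comm s t, add_comm]

lemma treeDist_self (s : Word) : treeDist s s = 0 := by
  simp [treeDist, (lcsLen_eq_length_iff s s).2 List.suffix_rfl]

lemma treeDist_append_append (s t x : Word) : treeDist (s ++ x) (t ++ x) = treeDist s t := by
  simp [treeDist, lcsLen_append_append, Nat.add_sub_add_right]

lemma treeDist_cons_self (b : Bool) (s : Word) : treeDist s (b :: s) = 1 := by
  simp [treeDist, (lcsLen_eq_length_iff s (b :: s)).2 (List.suffix_cons b s)]

lemma exists_eq_append_treeDist (s t : Word) :
    ∃ c s' t', s = s' ++ c ∧ t = t' ++ c ∧ treeDist s t = s'.length + t'.length := by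
  obtain ⟨c, s', t', hs, ht, h0⟩ := exists_eq_append_lcpLen s.reverse t.reverse
  rw [List.reverse_eq_iff, List.reverse_append] at hs ht
  refine ⟨c.reverse, s'.reverse, t'.reverse, hs, ht, ?_⟩
  rw [hs, ht, treeDist_append_append]
  simp [treeDist, lcsLen, h0]

lemma treeDist_triangle (s t u : Word) : treeDist s u ≤ treeDist s t + treeDist t u := by
  have := treeDist_add_two_mul_lcsLen s t
  have := treeDist_add_two_mul_lcsLen t u
  have := treeDist_add_two_mul_lcsLen s u
  have := min_lcsLen_le s t u
  have := lcsLen_le_length_right s t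
  have := lcsLen_le_length_left t u
  omega

lemma treeDist_four_point (s t u v : Word) :
    treeDist s t + treeDist u v ≤
      max (treeDist s u + treeDist v t) (treeDist s v + treeDist u t) := by
  have := treeDist_add_two_mul_lcsLen s t
  have := treeDist_add_two_mul_lcsLen u v
  have := treeDist_add_two_mul_lcsLen s u
  have := treeDist_add_two_mul_lcsLen v t
  have := treeDist_add_two_mul_lcsLen s v
  have := treeDist_add_two_mul_lcsLen u t
  have := min_lcsLen_le s u t
  have := min_lcsLen_le s v t
  have := min_lcsLen_le u s v
  have := min_lcsLen_le u t v
  have := lcsLen_comm u s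
  have := lcsLen_comm t v
  omega

lemma mem_geodesic_of_treeDist_lt {s t u v : Word} (hv : v ∈ geodesic s t)
    (hu : treeDist s u < treeDist s v) : v ∈ geodesic u t := by
  have hv : treeDist s v + treeDist v t = treeDist s t := hv
  have := treeDist_four_point s t u v
  exact le_antisymm (by omega) (treeDist_triangle u v t)

lemma geodesic_subset_Delta {x s t : Word} (hs : s ∈ Delta x) (ht : t ∈ Delta x) :
    geodesic s t ⊆ Delta x := by
  intro v hv
  have hv : treeDist s v + treeDist v t = treeDist s t := hv
  have hxs := (lcsLen_eq_length_iff x s).2 hs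
  have hxt := (lcsLen_eq_length_iff x t).2 ht
  refine (lcsLen_eq_length_iff x v).1 (le_antisymm (lcsLen_le_length_left x v) ?_)
  have := treeDist_add_two_mul_lcsLen s v
  have := treeDist_add_two_mul_lcsLen v t
  have := treeDist_add_two_mul_lcsLen s t
  have := lcsLen_le_length_left v t
  have := min_lcsLen_le x s v
  have := min_lcsLen_le s x t
  have := lcsLen_comm s x
  omega

lemma finite_treeDist_le (t : Word) (S : ℕ) : {s | treeDist s t ≤ S}.Finite := by
  refine (List.finite_length_le Bool (t.length + S)).subset fun s (hs : treeDist s t ≤ S) => ?_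
  have := treeDist_add_two_mul_lcsLen s t
  have := lcsLen_le_length_right s t
  simp only [Set.mem_ofPred_eq]
  omega

lemma pow_treeDist_mul_le {D : ℝ≥0∞} {F : Word → ℝ≥0∞}
    (hF : ∀ s t, treeDist s t = 1 → D * F t ≤ F s) (s t : Word) :
    D ^ treeDist s t * F t ≤ F s := by
  have hup (w c : Word) : D ^ w.length * F c ≤ F (w ++ c) := by
    induction w with
    | nil => simp
    | cons b w ih =>
      rw [List.length_cons, pow_succ', mul_assoc]
      exact (mul_le_mul_right ih D).trans
        (hF _ _ (treeDist_comm _ _ ▸ treeDist_cons_self b (w ++ c)))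
  have hdown (w c : Word) : D ^ w.length * F (w ++ c) ≤ F c := by
    induction w with
    | nil => simp
    | cons b w ih =>
      rw [List.length_cons, pow_succ, mul_assoc]
      exact (mul_le_mul_right (hF _ _ (treeDist_cons_self b (w ++ c))) _).trans ih
  obtain ⟨c, s', t', rfl, rfl, hd⟩ := exists_eq_append_treeDist s t
  rw [hd, pow_add, mul_assoc]
  exact (mul_le_mul_right (hdown t' c) _).trans (hup s' c)

end Tree

/-! ### Green kernels on the branches -/

section Branch

variable {p : Word → Word → ℝ} {δ₀ : ℝ} {S K : ℕ}

lemma H1.finite_support_col (h1 : H1 p S) (t : Word) : (Function.support (p · t)).Finite :=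
  (finite_treeDist_le t S).subset fun s hs => not_lt.1 fun hlt => hs (h1 s t hlt)

theorem greenE_harnack (hδ₀ : δ₀ ≤ 1) (h3 : H3 p δ₀ K) {x s v : Word} (hs : s ∈ Delta x)
    (hv : v ∈ Delta x) (t : Word) :
    (ENNReal.ofReal δ₀ ^ K) ^ treeDist s v * greenE (Delta x) p v t ≤
      greenE (Delta x) p s t := by
  obtain ⟨s, rfl⟩ := hs
  obtain ⟨v, rfl⟩ := hv
  rw [treeDist_append_append]
  refine pow_treeDist_mul_le (F := fun w => greenE (Delta x) p (w ++ x) t) (fun a b hab => ?_) s v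
  obtain ⟨k, hkK, u, rfl, rfl, hu⟩ := h3 a b hab
  refine le_trans ?_ (pow_mul_greenE_le_of_path (u := fun i => u i ++ x)
    (fun i _ => ⟨u i, rfl⟩) fun i hi => hu i hi x)
  gcongr ?_ * _
  exact pow_le_pow_right_of_le_one' (ENNReal.ofReal_le_one.2 hδ₀) hkK

theorem pow_mul_greenE_le_of_mem_geodesic {Ω : Set Word} {D : ℝ≥0∞} (h1 : H1 p S) (hD : D ≤ 1)
    (hharnack : ∀ s ∈ Ω, ∀ v ∈ Ω, ∀ t,
      D ^ treeDist s v * greenE Ω p v t ≤ greenE Ω p s t)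
    {s t v : Word} (hs : s ∈ Ω) (hvΩ : v ∈ Ω) (hv : v ∈ geodesic s t) :
    D ^ (2 * S) * greenE Ω p s t ≤ greenE Ω p s v * greenE Ω p v t := by
  have hpow {u w : Word} (h : treeDist u w ≤ S) : D ^ S ≤ D ^ treeDist u w :=
    pow_le_pow_right_of_le_one' hD h
  refine const_mul_greenE_le_of_superharmonic
    (U := {u ∈ Ω | v ∈ geodesic u t ∧ S < treeDist u v}) (B := {u ∈ Ω | treeDist u v ≤ S})
    (h := fun u => greenE Ω p u v * greenE Ω p v t) (Set.sep_subset _ _) ?_ ?_ ?_ ?_ ?_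
  · rintro ⟨-, ht, hlt⟩
    have ht : treeDist t v + treeDist v t = treeDist t t := ht
    rw [treeDist_self] at ht
    omega
  · rintro s ⟨-, hsv, hlt⟩ u hu hsu
    have hstep : treeDist s u ≤ S := not_lt.1 fun h => hsu (h1 s u h)
    have huv : v ∈ geodesic u t := mem_geodesic_of_treeDist_lt hsv (hstep.trans_lt hlt)
    rcases lt_or_ge S (treeDist u v) with h | h
    · exact Or.inl ⟨hu, huv, h⟩
    · exact Or.inr ⟨hu, h⟩
  · rintro s ⟨hs, -⟩
    simp only [← mul_assoc, ENNReal.tsum_mul_right]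
    gcongr
    exact tsum_mul_greenE_le hs
  · rintro s ⟨hs, hball⟩
    have hsv : D ^ S ≤ greenE Ω p s v :=
      calc D ^ S ≤ D ^ treeDist s v * 1 := by simpa using hpow hball
        _ ≤ D ^ treeDist s v * greenE Ω p v v := by gcongr; exact one_le_greenE_self hvΩ
        _ ≤ greenE Ω p s v := hharnack s hs v hvΩ v
    have hvt : D ^ S * greenE Ω p s t ≤ greenE Ω p v t :=
      (mul_le_mul_left (hpow (treeDist_comm s v ▸ hball)) _).trans (hharnack v hvΩ s hs t)
    rw [two_mul, pow_add, mul_assoc]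
    exact mul_le_mul' hsv hvt
  · rcases lt_or_ge S (treeDist s v) with h | h
    · exact Or.inl ⟨hs, hv, h⟩
    · exact Or.inr ⟨hs, h⟩

theorem greenE_le_of_mem_geodesic (hδ₀ : 0 < δ₀) (hδ₁ : δ₀ ≤ 1) (h1 : H1 p S) (h3 : H3 p δ₀ K)
    {x s t v : Word} (hs : s ∈ Delta x) (hvx : v ∈ Delta x) (hv : v ∈ geodesic s t) :
    greenE (Delta x) p s t ≤ ENNReal.ofReal ((δ₀ ^ K) ^ (2 * S))⁻¹ *
      (greenE (Delta x) p s v * greenE (Delta x) p v t) := by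
  have hpos : 0 < (δ₀ ^ K) ^ (2 * S) := by positivity
  rw [ENNReal.ofReal_inv_of_pos hpos,
    ← ENNReal.mul_le_iff_le_inv (by simpa using hpos) ENNReal.ofReal_ne_top,
    ENNReal.ofReal_pow (by positivity), ENNReal.ofReal_pow hδ₀.le]
  exact pow_mul_greenE_le_of_mem_geodesic h1 (pow_le_one' (ENNReal.ofReal_le_one.2 hδ₁) K)
    (fun s hs v hv t => greenE_harnack hδ₁ h3 hs hv t) hs hvx hv

end Branch

lemma toReal_le_mul_toReal {c : ℝ} {y z : ℝ≥0∞} (hc : 0 ≤ c) (hz : z ≠ ⊤)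
    (h : y ≤ ENNReal.ofReal c * z) : y.toReal ≤ c * z.toReal := by
  simpa [ENNReal.toReal_mul, hc] using
    ENNReal.toReal_mono (ENNReal.mul_ne_top ENNReal.ofReal_ne_top hz) h

theorem lem_4_3_general (S : ℕ) {δ₀ : ℝ} (hδ₀ : 0 < δ₀) (hδ₁ : δ₀ ≤ 1) (K : ℕ)
    {lam : ℝ} (hlam₀ : 0 ≤ lam) (hlam₁ : lam < 1) :
    ∃ C₁ > (0 : ℝ), ∀ p : Word → Word → ℝ, (∀ s t, 0 ≤ p s t) →
      H1 p S → H3 p δ₀ K → ∀ m : Word → ℝ, H4 p m lam →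
      ∀ x : Word, ∀ s ∈ Delta x, ∀ t ∈ Delta x, ∀ v ∈ geodesic s t,
        greenE (Delta x) p s t < ⊤ ∧ greenE (Delta x) p s v < ⊤ ∧
        greenE (Delta x) p v t < ⊤ ∧
        C₁⁻¹ * ((greenE (Delta x) p s v).toReal * (greenE (Delta x) p v t).toReal) ≤
          (greenE (Delta x) p s t).toReal ∧
        (greenE (Delta x) p s t).toReal ≤
          C₁ * ((greenE (Delta x) p s v).toReal * (greenE (Delta x) p v t).toReal) := by
  have hgap : 0 < (1 - lam)⁻¹ := inv_pos.2 (sub_pos.2 hlam₁)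
  set C₁ := max (1 - lam)⁻¹ ((δ₀ ^ K) ^ (2 * S))⁻¹
  have hC₁ : 0 < C₁ := lt_max_of_lt_left hgap
  refine ⟨C₁, hC₁, fun p hp h1 h3 m ⟨hm, hP⟩ x s hs t ht v hv => ?_⟩
  have hvx := geodesic_subset_Delta hs ht hv
  have hgreen := greenE_le_of_opNormBound (Ω := Delta x) hp h1.finite_support_col hm hlam₀ hlam₁ hP
  have hfin (u w : Word) : greenE (Delta x) p u w < ⊤ :=
    (hgreen u w).trans_lt ENNReal.ofReal_lt_top
  have hdiag : greenE (Delta x) p v v ≤ ENNReal.ofReal C₁ := by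
    refine (hgreen v v).trans (ENNReal.ofReal_le_ofReal ?_)
    rw [div_self (Real.sqrt_pos.2 (hm v)).ne', mul_one]
    exact le_max_left _ _
  have hlower := (greenE_mul_greenE_le s v t).trans (mul_le_mul_left hdiag _)
  have hupper := (greenE_le_of_mem_geodesic hδ₀ hδ₁ h1 h3 hs hvx hv).trans
    (mul_le_mul_left (ENNReal.ofReal_le_ofReal (le_max_right _ _ : _ ≤ C₁)) _)
  refine ⟨hfin s t, hfin s v, hfin v t, ?_, ?_⟩
  · rw [inv_mul_le_iff₀ hC₁, ← ENNReal.toReal_mul]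
    exact toReal_le_mul_toReal hC₁.le (hfin s t).ne hlower
  · rw [← ENNReal.toReal_mul]
    exact toReal_le_mul_toReal hC₁.le (ENNReal.mul_ne_top (hfin s v).ne (hfin v t).ne) hupper

/-- Lemma 4.3: uniform almost multiplicativity of the Green kernels `G_{p,Δ_x}` along
geodesics, with a constant `C₁` depending only on `S`, `δ₀`, `K` and `λ`. -/
theorem lem_4_3 (S : ℕ) (δ₀ : ℝ) (hδ₀ : δ₀ ∈ Set.Ioo (0 : ℝ) 1) (K : ℕ)
    (lam : ℝ) (hlam : lam ∈ Set.Ioo (0 : ℝ) 1) :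
    ∃ C₁ > (0 : ℝ), ∀ p : Word → Word → ℝ, (∀ s t, 0 ≤ p s t) →
      H1 p S → H2 p δ₀ → H3 p δ₀ K → ∀ m : Word → ℝ, H4 p m lam →
      ∀ x : Word, ∀ s ∈ Delta x, ∀ t ∈ Delta x, ∀ v ∈ geodesic s t,
        greenE (Delta x) p s t < ⊤ ∧ greenE (Delta x) p s v < ⊤ ∧
        greenE (Delta x) p v t < ⊤ ∧
        C₁⁻¹ * ((greenE (Delta x) p s v).toReal * (greenE (Delta x) p v t).toReal) ≤
          (greenE (Delta x) p s t).toReal ∧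
        (greenE (Delta x) p s t).toReal ≤
          C₁ * ((greenE (Delta x) p s v).toReal * (greenE (Delta x) p v t).toReal) := by
  obtain ⟨C₁, hC₁, h⟩ := lem_4_3_general S hδ₀.1 hδ₀.2.le K hlam.1.le hlam.2
  exact ⟨C₁, hC₁, fun p hp h1 _ => h p hp h1⟩

end Paper
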